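/- For n ≥ 1 coprime to D, the number of ideals of norm n in the ring of integers of the imaginary quadratic field K = Q(√-D) equals the sum over divisors d of n of χ_{-D}(d). -/

import Mathlib

/-!
Both sides are multiplicative in `n`, so it suffices to treat prime powers `p ^ k` with `p ∤ D`.

For the left-hand side, unique factorization of ideals turns an ideal of norm `m * n`, with `m`
and `n` coprime, into a unique product of an ideal of norm `m` and one of norm `n`
(`ncard_idealsOfNorm_mul`). For the right-hand side, the Kronecker symbol is multiplicative by
construction (`sum_kronecker_mul`).

At a prime `p ∤ D`, let `ω = (D + √-D) / 2`, an algebraic integer with minimal polynomial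
`f = X ^ 2 - D * X + m`, where `4 * m = D * (D + 1)`; its discriminant is `-D`. Then `χ_{-D}(p)`
is `1` or `-1` according to whether `f` has a root modulo `p` (`kroneckerPrime_eq_one_or`), which
treats `p = 2` on the same footing as odd `p`.

* If `f` has a root `x` modulo `p`, then `p` divides `(ω - x) * (ω - (D - x))` but, by a trace
  computation, neither factor; hence `p = P * Q` with distinct primes `P`, `Q` of norm `p`
  (`exists_split`), and there are `k + 1` ideals of norm `p ^ k`.
* If `f` has no root modulo `p`, then `p` is inert (`prime_span_of_no_root`), and there is one
  ideal of norm `p ^ k` for even `k` and none for odd `k`.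

These counts are the values of `∑_{i ≤ k} χ_{-D}(p) ^ i`. Since `-D` is a discriminant,
`-D ≡ 0` or `1` modulo `4`, which is what makes `ω` integral; the argument uses only relations
satisfied by `ω`, not an integral basis of `𝓞 K`.
-/

open Finset NumberField

/-- The Kronecker symbol `(a|p)` at a prime `p`. -/
def kroneckerPrime (a : ℤ) (p : ℕ) : ℤ :=
  if p = 2 then (if a % 2 = 0 then 0 else if a % 8 = 1 ∨ a % 8 = 7 then 1 else -1)
  else jacobiSym a p

/-- The Kronecker symbol `(a|n)` for `n ≥ 1`, extended multiplicatively from primes. -/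
def kronecker (a : ℤ) (n : ℕ) : ℤ :=
  n.factorization.prod fun p k => (kroneckerPrime a p) ^ k

/-- `d` is a fundamental discriminant. -/
def IsFundamentalDiscriminant (d : ℤ) : Prop :=
  (d % 4 = 1 ∧ Squarefree d) ∨
    (d % 4 = 0 ∧ Squarefree (d / 4) ∧ (d / 4 % 4 = 2 ∨ d / 4 % 4 = 3))

/-! ### Ideals of given norm in a number field -/

section
variable {K : Type} [Field K] [NumberField K]

/-- The set of ideals of `𝓞 K` of norm `n`. -/
def idealsOfNorm (K : Type) [Field K] [NumberField K] (n : ℕ) : Set (Ideal (𝓞 K)) :=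
  {I | Ideal.absNorm I = n}

theorem ncard_idealsOfNorm_one : (idealsOfNorm K 1).ncard = 1 := by
  rw [Set.ncard_eq_one]
  refine ⟨⊤, ?_⟩
  ext I
  simp [idealsOfNorm, Ideal.absNorm_eq_one_iff]

theorem dvd_span_of_absNorm {I : Ideal (𝓞 K)} {n : ℕ} (h : Ideal.absNorm I = n) :
    I ∣ Ideal.span {(n : 𝓞 K)} := by
  rw [Ideal.dvd_iff_le, ← h]
  exact Ideal.span_singleton_absNorm_le I

theorem isCoprime_of_coprime_absNorm {A B : Ideal (𝓞 K)}
    (h : Nat.Coprime (Ideal.absNorm A) (Ideal.absNorm B)) : IsCoprime A B := by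
  rw [Ideal.isCoprime_iff_sup_eq, ← Ideal.absNorm_eq_one_iff]
  exact Nat.eq_one_of_dvd_coprimes h
    (Ideal.absNorm_dvd_absNorm_of_le le_sup_left) (Ideal.absNorm_dvd_absNorm_of_le le_sup_right)

/-- An ideal of norm `m * n` with `m`, `n` coprime factors uniquely as a product of
ideals of norms `m` and `n`. -/
theorem ncard_idealsOfNorm_mul {m n : ℕ} (h : Nat.Coprime m n) :
    (idealsOfNorm K (m * n)).ncard = (idealsOfNorm K m).ncard * (idealsOfNorm K n).ncard := by
  have himg : idealsOfNorm K (m * n) =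
      (fun x : Ideal (𝓞 K) × Ideal (𝓞 K) => x.1 * x.2) ''
        (idealsOfNorm K m ×ˢ idealsOfNorm K n) := by
    ext I
    simp only [idealsOfNorm, Set.mem_ofPred_eq, Set.mem_image, Set.mem_prod, Prod.exists]
    constructor
    · intro hI
      have hd := dvd_span_of_absNorm hI
      rw [Nat.cast_mul, ← Ideal.span_singleton_mul_span_singleton] at hd
      obtain ⟨A, B, hA, hB, rfl⟩ := exists_dvd_and_dvd_of_dvd_mul hd
      have hA' := map_dvd Ideal.absNorm hA
      have hB' := map_dvd Ideal.absNorm hB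
      rw [Ideal.absNorm_span_natCast] at hA' hB'
      rw [map_mul] at hI
      -- the norm of `A` divides a power of `m`, so it is coprime to `n`; dually for `B`
      have cA : Nat.Coprime (Ideal.absNorm A) n :=
        Nat.Coprime.coprime_dvd_left hA' (h.pow_left _)
      have cB : Nat.Coprime (Ideal.absNorm B) m :=
        Nat.Coprime.coprime_dvd_left hB' (h.symm.pow_left _)
      have h1 : Ideal.absNorm A ∣ m := cA.dvd_of_dvd_mul_right (hI ▸ dvd_mul_right _ _)
      have h2 : m ∣ Ideal.absNorm A := cB.symm.dvd_of_dvd_mul_right (hI ▸ dvd_mul_right _ _)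
      have h3 : Ideal.absNorm B ∣ n := cB.dvd_of_dvd_mul_left (hI ▸ dvd_mul_left _ _)
      have h4 : n ∣ Ideal.absNorm B := cA.symm.dvd_of_dvd_mul_left (hI ▸ dvd_mul_left _ _)
      exact ⟨A, B, ⟨Nat.dvd_antisymm h1 h2, Nat.dvd_antisymm h3 h4⟩, rfl⟩
    · rintro ⟨A, B, ⟨hA, hB⟩, rfl⟩
      rw [map_mul, hA, hB]
  rw [himg, Set.InjOn.ncard_image, Set.ncard_prod]
  rintro ⟨A, B⟩ ⟨hA, hB⟩ ⟨A', B'⟩ ⟨hA', hB'⟩ hEq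
  simp only [idealsOfNorm, Set.mem_ofPred_eq] at hA hB hA' hB' hEq
  have c1 : IsCoprime A B' := isCoprime_of_coprime_absNorm (by rwa [hA, hB'])
  have c2 : IsCoprime A' B := isCoprime_of_coprime_absNorm (by rwa [hA', hB])
  have e1 : A = A' := dvd_antisymm (c1.dvd_of_dvd_mul_right (hEq ▸ dvd_mul_right _ _))
    (c2.dvd_of_dvd_mul_right (hEq ▸ dvd_mul_right _ _))
  have e2 : B = B' := dvd_antisymm (c2.symm.dvd_of_dvd_mul_left (hEq ▸ dvd_mul_left _ _))
    (c1.symm.dvd_of_dvd_mul_left (hEq ▸ dvd_mul_left _ _))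
  rw [e1, e2]

/-- If `p = P * Q` splits, the ideals of norm `p ^ k` are `P ^ i * Q ^ (k - i)`, `0 ≤ i ≤ k`. -/
theorem ncard_idealsOfNorm_pow_split {p : ℕ} (hp : p.Prime) {P Q : Ideal (𝓞 K)}
    (hP : Prime P) (hQ : Prime Q) (hPQ : P ≠ Q) (hmul : Ideal.span {(p : 𝓞 K)} = P * Q)
    (nP : Ideal.absNorm P = p) (nQ : Ideal.absNorm Q = p) (k : ℕ) :
    (idealsOfNorm K (p ^ k)).ncard = k + 1 := by
  have himg : idealsOfNorm K (p ^ k) =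
      (fun i : ℕ => P ^ i * Q ^ (k - i)) '' (Finset.range (k + 1) : Set ℕ) := by
    ext I
    simp only [idealsOfNorm, Set.mem_ofPred_eq, Set.mem_image, Finset.mem_coe, Finset.mem_range]
    constructor
    · intro hI
      have hd := dvd_span_of_absNorm hI
      rw [Nat.cast_pow, ← Ideal.span_singleton_pow, hmul, mul_pow] at hd
      obtain ⟨A, B, hA, hB, rfl⟩ := exists_dvd_and_dvd_of_dvd_mul hd
      obtain ⟨i, hi, hA⟩ := (dvd_prime_pow hP _).1 hA
      obtain ⟨j, hj, hB⟩ := (dvd_prime_pow hQ _).1 hB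
      rw [associated_iff_eq] at hA hB
      subst hA hB
      rw [map_mul, map_pow, map_pow, nP, nQ, ← pow_add] at hI
      have hij := Nat.pow_right_injective hp.two_le hI
      refine ⟨i, by omega, ?_⟩
      rw [show k - i = j by omega]
    · rintro ⟨i, hi, rfl⟩
      rw [map_mul, map_pow, map_pow, nP, nQ, ← pow_add, show i + (k - i) = k by omega]
  have key : ∀ i j : ℕ, i ≤ k → j ≤ k → P ^ i * Q ^ (k - i) = P ^ j * Q ^ (k - j) → ¬ i < j := by
    intro i j hi hj h hij
    have h1 : P ^ j ∣ P ^ i * Q ^ (k - i) := h ▸ dvd_mul_right _ _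
    rw [show j = i + (j - i) by omega, pow_add] at h1
    have h2 := (mul_dvd_mul_iff_left (pow_ne_zero i hP.ne_zero)).1 h1
    have h3 := hP.dvd_of_dvd_pow ((dvd_pow_self P (by omega)).trans h2)
    exact hPQ (associated_iff_eq.1 ((hP.dvd_prime_iff_associated hQ).1 h3))
  rw [himg, Set.InjOn.ncard_image, Set.ncard_coe_finset, Finset.card_range]
  intro i hi j hj hEq
  simp only [Finset.mem_coe, Finset.mem_range] at hi hj
  have := key i j (by omega) (by omega) hEq
  have := key j i (by omega) (by omega) hEq.symm
  omega

/-- If `p` is inert, the only ideals of `p`-power norm are the powers of `p`, of norm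
`p ^ (2 * i)`. -/
theorem ncard_idealsOfNorm_pow_inert {p : ℕ} (hp : p.Prime)
    (hdeg : Module.finrank ℚ K = 2) (hP : Prime (Ideal.span {(p : 𝓞 K)})) (k : ℕ) :
    (idealsOfNorm K (p ^ k)).ncard = if Even k then 1 else 0 := by
  have nP : Ideal.absNorm (Ideal.span {(p : 𝓞 K)}) = p ^ 2 := by
    rw [Ideal.absNorm_span_natCast, RingOfIntegers.rank, hdeg]
  have hmem : ∀ I ∈ idealsOfNorm K (p ^ k), ∃ i, k = 2 * i ∧ I = Ideal.span {(p : 𝓞 K)} ^ i := by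
    intro I hI
    have hd := dvd_span_of_absNorm hI
    rw [Nat.cast_pow, ← Ideal.span_singleton_pow] at hd
    obtain ⟨i, hi, hA⟩ := (dvd_prime_pow hP _).1 hd
    rw [associated_iff_eq] at hA
    refine ⟨i, ?_, hA⟩
    simp only [idealsOfNorm, Set.mem_ofPred_eq] at hI
    rw [hA, map_pow, nP, ← pow_mul] at hI
    exact (Nat.pow_right_injective hp.two_le hI).symm
  split_ifs with hk
  · obtain ⟨r, hr⟩ := hk
    rw [Set.ncard_eq_one]
    refine ⟨Ideal.span {(p : 𝓞 K)} ^ r, ?_⟩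
    ext I
    rw [Set.mem_singleton_iff]
    constructor
    · intro hI
      obtain ⟨i, hi, rfl⟩ := hmem I hI
      rw [show i = r by omega]
    · rintro rfl
      simp only [idealsOfNorm, Set.mem_ofPred_eq]
      rw [map_pow, nP, ← pow_mul]
      congr 1
      omega
  · have : idealsOfNorm K (p ^ k) = ∅ := by
      rw [Set.eq_empty_iff_forall_notMem]
      intro I hI
      obtain ⟨i, hi, -⟩ := hmem I hI
      exact hk ⟨i, by omega⟩
    rw [this, Set.ncard_empty]
/-! ### Splitting of primes in a quadratic field -/


open Polynomial in
/-- The minimal polynomial of `√-D` over `ℚ` is `X ^ 2 + D`, which has no linear term. -/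
theorem trace_sqrt_neg {D : ℕ} (hD : 0 < D) {α : K} (hα : α ^ 2 = ((-(D : ℤ) : ℤ) : K)) :
    Algebra.trace ℚ K α = 0 := by
  have hirr : Irreducible (X ^ 2 - C (-(D : ℚ))) := by
    refine X_pow_sub_C_irreducible_of_prime Nat.prime_two fun b hb => ?_
    have : (0 : ℚ) < D := by exact_mod_cast hD
    nlinarith [sq_nonneg b]
  have hmin : X ^ 2 - C (-(D : ℚ)) = minpoly ℚ α := by
    refine minpoly.eq_of_irreducible_of_monic hirr ?_ (monic_X_pow_sub_C _ two_ne_zero)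
    simp [hα]
  rw [trace_eq_finrank_mul_minpoly_nextCoeff, ← hmin,
    nextCoeff_of_natDegree_pos (by rw [natDegree_X_pow_sub_C]; norm_num), natDegree_X_pow_sub_C]
  simp

/-- Taking traces in `ω - x = p * β`, where `ω = (D + √-D) / 2` has trace `D`,
gives `D - 2 * x = p * tr β`. -/
theorem dvd_of_dvd_omega_sub (hdeg : Module.finrank ℚ K = 2) {D : ℕ} (hD : 0 < D) {α : K}
    (hα : α ^ 2 = ((-(D : ℤ) : ℤ) : K)) {ω : 𝓞 K} (hω : 2 * (ω : K) = D + α)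
    {p : ℕ} {x : ℤ} (h : (p : 𝓞 K) ∣ ω - (x : 𝓞 K)) : (p : ℤ) ∣ D - 2 * x := by
  obtain ⟨β, hβ⟩ := h
  have h1 : (2 * p : ℚ) • (β : K) = α + algebraMap ℚ K ((D : ℚ) - 2 * x) := by
    have hβ' := congrArg (fun z : 𝓞 K => (z : K)) hβ
    simp only [map_sub, map_mul, map_natCast, map_intCast] at hβ'
    rw [Algebra.smul_def]
    simp only [map_mul, map_sub, map_natCast, map_intCast, map_ofNat]
    linear_combination hω - 2 * hβ'
  have h2 := congrArg (Algebra.trace ℚ K) h1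
  rw [map_smul, map_add, trace_sqrt_neg hD hα, Algebra.trace_algebraMap, hdeg,
    ← Algebra.coe_trace_int] at h2
  refine ⟨Algebra.trace ℤ (𝓞 K) β, ?_⟩
  simp only [smul_eq_mul, nsmul_eq_mul] at h2
  have h3 : ((D : ℚ) - 2 * x) = p * (Algebra.trace ℤ (𝓞 K) β : ℤ) := by
    push_cast at h2
    linarith
  exact_mod_cast h3

/-- The element `ω = (D + √-D) / 2` is integral: `D * (D + 1) / 4` is an integer, so `ω` is a root
of the monic polynomial `X ^ 2 - D * X + D * (D + 1) / 4`. -/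
theorem exists_omega {D : ℕ} {α : K} (hα : α ^ 2 = ((-(D : ℤ) : ℤ) : K)) {m : ℤ}
    (hm : (D : ℤ) * (D + 1) = 4 * m) :
    ∃ ω : 𝓞 K, 2 * (ω : K) = D + α ∧ ω ^ 2 = D * ω - m := by
  have hmK : (D : K) * (D + 1) = 4 * m := by exact_mod_cast congrArg (Int.cast : ℤ → K) hm
  have hrel : ((D + α) / 2) ^ 2 = D * ((D + α) / 2) - m := by
    push_cast at hα
    field_simp
    linear_combination hα - hmK
  have hωint : IsIntegral ℤ ((D + α) / 2) := by
    refine ⟨.X ^ 2 - (.C (D : ℤ) * .X - .C m), ?_, ?_⟩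
    · monicity!
    · simp [Polynomial.eval₂_eq_eval_map, hrel]
  obtain ⟨ω, hω⟩ : ∃ ω : 𝓞 K, (ω : K) = (D + α) / 2 := ⟨⟨_, hωint⟩, rfl⟩
  refine ⟨ω, ?_, ?_⟩
  · rw [hω]
    field_simp
  · apply RingOfIntegers.coe_injective
    rw [map_pow, map_sub, map_mul, map_natCast, map_intCast]
    rw [← hω] at hrel
    exact hrel

/-- If `x ^ 2 - D * x + m`, the minimal polynomial of `ω`, has a root modulo `p ∤ D`, then `p`
splits in `𝓞 K`. -/
theorem exists_split (hdeg : Module.finrank ℚ K = 2) {D : ℕ} (hD : 0 < D) {α : K}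
    (hα : α ^ 2 = ((-(D : ℤ) : ℤ) : K)) {ω : 𝓞 K} (hω : 2 * (ω : K) = D + α) {m : ℤ}
    (hm : (D : ℤ) * (D + 1) = 4 * m) (hω2 : ω ^ 2 = D * ω - m)
    {p : ℕ} (hp : p.Prime) (hpD : ¬ p ∣ D) {x : ℤ} (hx : (p : ℤ) ∣ x ^ 2 - D * x + m) :
    ∃ P Q : Ideal (𝓞 K), Prime P ∧ Prime Q ∧ P ≠ Q ∧ Ideal.span {(p : 𝓞 K)} = P * Q ∧
      Ideal.absNorm P = p ∧ Ideal.absNorm Q = p := by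
  have hpZ : Prime (p : ℤ) := Nat.prime_iff_prime_int.1 hp
  have hp0 : Ideal.span {(p : 𝓞 K)} ≠ ⊥ := by
    simpa [Ideal.span_singleton_eq_bot] using hp.ne_zero
  have nI : Ideal.absNorm (Ideal.span {(p : 𝓞 K)}) = p ^ 2 := by
    rw [Ideal.absNorm_span_natCast, RingOfIntegers.rank, hdeg]
  -- `(D - 2x)² = 4(x² - Dx + m) - D`, so the two roots `x` and `D - x` are distinct modulo `p`
  have hndvd : ¬ (p : ℤ) ∣ D - 2 * x := by
    intro h
    apply hpD
    have h1 : (p : ℤ) ∣ 4 * (x ^ 2 - D * x + m) - (D - 2 * x) * (D - 2 * x) :=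
      dvd_sub (hx.mul_left _) (h.mul_left _)
    rw [show 4 * (x ^ 2 - D * x + m) - (D - 2 * x) * (D - 2 * x) = D by
      linear_combination -hm] at h1
    exact_mod_cast h1
  have n1 : ω - (x : 𝓞 K) ∉ Ideal.span {(p : 𝓞 K)} := by
    rw [Ideal.mem_span_singleton]
    exact fun h => hndvd (dvd_of_dvd_omega_sub hdeg hD hα hω h)
  have n2 : ω - ((D - x : ℤ) : 𝓞 K) ∉ Ideal.span {(p : 𝓞 K)} := by
    rw [Ideal.mem_span_singleton]
    intro h
    have := dvd_of_dvd_omega_sub hdeg hD hα hω h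
    rw [show (D : ℤ) - 2 * (D - x) = -(D - 2 * x) by ring, dvd_neg] at this
    exact hndvd this
  have hprod : (ω - (x : 𝓞 K)) * (ω - ((D - x : ℤ) : 𝓞 K)) ∈ Ideal.span {(p : 𝓞 K)} := by
    obtain ⟨c, hc⟩ := hx
    rw [Ideal.mem_span_singleton]
    refine ⟨-(c : 𝓞 K), ?_⟩
    have hc' : (x : 𝓞 K) ^ 2 - D * x + m = p * c := by
      exact_mod_cast congrArg (Int.cast : ℤ → 𝓞 K) hc
    push_cast
    linear_combination hω2 - hc'
  have hnot : ¬ (Ideal.span {(p : 𝓞 K)}).IsPrime := fun h =>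
    (h.mem_or_mem hprod).elim n1 n2
  obtain ⟨P, hPmax, -, Q, hQ⟩ := Ideal.exists_isMaximal_dvd_of_dvd_absNorm hpZ
    (Ideal.span {(p : 𝓞 K)}) (by rw [nI]; exact_mod_cast dvd_pow_self p two_ne_zero)
  have hnn : Ideal.absNorm P * Ideal.absNorm Q = p ^ 2 := by rw [← map_mul, ← hQ, nI]
  have hP1 : Ideal.absNorm P ≠ 1 := by
    rw [Ne, Ideal.absNorm_eq_one_iff]
    exact hPmax.ne_top
  have hQ1 : Ideal.absNorm Q ≠ 1 := by
    rw [Ne, Ideal.absNorm_eq_one_iff]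
    rintro rfl
    rw [Ideal.mul_top] at hQ
    exact hnot (hQ ▸ hPmax.isPrime)
  obtain ⟨nP, nQ⟩ := (hp.mul_eq_prime_sq_iff hP1 hQ1).1 hnn
  have hPQ0 : P ≠ ⊥ ∧ Q ≠ ⊥ := by
    constructor
    · rintro rfl; exact hp0 (by rw [hQ, Ideal.bot_mul])
    · rintro rfl; exact hp0 (by rw [hQ, Ideal.mul_bot])
  have hQp : Q.IsPrime := Ideal.isPrime_of_irreducible_absNorm (by rw [nQ]; exact hp)
  have hPp := hPmax.isPrime
  refine ⟨P, Q, (Ideal.prime_iff_isPrime hPQ0.1).2 hPp, (Ideal.prime_iff_isPrime hPQ0.2).2 hQp,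
    ?_, hQ, nP, nQ⟩
  rintro rfl
  rw [← sq] at hQ
  -- at most one of the two factors lies in `P`, so the other one lies in `P ^ 2 = (p)`
  by_cases hmem : ω - (x : 𝓞 K) ∈ P
  · by_cases hmem2 : ω - ((D - x : ℤ) : 𝓞 K) ∈ P
    · have hsub := P.sub_mem hmem hmem2
      rw [show ω - (x : 𝓞 K) - (ω - ((D - x : ℤ) : 𝓞 K)) = ((D - 2 * x : ℤ) : 𝓞 K) by
        push_cast; ring] at hsub
      have hc := Ideal.span_singleton_absNorm (nP ▸ hp : (Ideal.absNorm P).Prime)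
      have : (D - 2 * x : ℤ) ∈ Ideal.comap (algebraMap ℤ (𝓞 K)) P := by simpa using hsub
      rw [← hc, Ideal.mem_span_singleton, nP] at this
      exact hndvd this
    · rw [hQ, mul_comm] at hprod
      rcases Ideal.IsPrime.mul_mem_pow P hprod with h | h
      · exact hmem2 h
      · exact n1 (hQ ▸ h)
  · rw [hQ] at hprod
    rcases Ideal.IsPrime.mul_mem_pow P hprod with h | h
    · exact hmem h
    · exact n2 (hQ ▸ h)

/-- If the minimal polynomial of `ω` has no root modulo `p`, then no ideal has norm `p`: its
residue field would be `ℤ / p` and would contain the image of `ω`. So `p` is inert. -/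
theorem prime_span_of_no_root (hdeg : Module.finrank ℚ K = 2) {D : ℕ} {ω : 𝓞 K} {m : ℤ}
    (hω2 : ω ^ 2 = D * ω - m) {p : ℕ} (hp : p.Prime)
    (hx : ∀ x : ℤ, ¬ (p : ℤ) ∣ x ^ 2 - D * x + m) : Prime (Ideal.span {(p : 𝓞 K)}) := by
  have hpZ : Prime (p : ℤ) := Nat.prime_iff_prime_int.1 hp
  have hp0 : Ideal.span {(p : 𝓞 K)} ≠ ⊥ := by
    simpa [Ideal.span_singleton_eq_bot] using hp.ne_zero
  have nI : Ideal.absNorm (Ideal.span {(p : 𝓞 K)}) = p ^ 2 := by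
    rw [Ideal.absNorm_span_natCast, RingOfIntegers.rank, hdeg]
  obtain ⟨P, hPmax, -, Q, hQ⟩ := Ideal.exists_isMaximal_dvd_of_dvd_absNorm hpZ
    (Ideal.span {(p : 𝓞 K)}) (by rw [nI]; exact_mod_cast dvd_pow_self p two_ne_zero)
  have hnn : Ideal.absNorm P * Ideal.absNorm Q = p ^ 2 := by rw [← map_mul, ← hQ, nI]
  have hP1 : Ideal.absNorm P ≠ 1 := by
    rw [Ne, Ideal.absNorm_eq_one_iff]
    exact hPmax.ne_top
  by_cases hQ1 : Ideal.absNorm Q = 1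
  · rw [Ideal.absNorm_eq_one_iff] at hQ1
    rw [hQ1, Ideal.mul_top] at hQ
    rw [Ideal.prime_iff_isPrime hp0, hQ]
    exact hPmax.isPrime
  exfalso
  obtain ⟨nP, -⟩ := (hp.mul_eq_prime_sq_iff hP1 hQ1).1 hnn
  have : Fact p.Prime := ⟨hp⟩
  have hcard : Nat.card (𝓞 K ⧸ P) = p := nP
  have : Nontrivial (𝓞 K ⧸ P) := Ideal.Quotient.nontrivial_iff.2 hPmax.ne_top
  obtain ⟨x, hxω⟩ := AddSubgroup.mem_zmultiples_iff.1
    (mem_zmultiples_of_prime_card hcard (one_ne_zero : (1 : 𝓞 K ⧸ P) ≠ 0)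
      (g' := Ideal.Quotient.mk P ω))
  have hz : Ideal.Quotient.mk P ((x ^ 2 - D * x + m : ℤ) : 𝓞 K) = 0 := by
    have h2 := congrArg (Ideal.Quotient.mk P) hω2
    simp only [map_sub, map_mul, map_pow, map_natCast, map_intCast, ← hxω, zsmul_eq_mul,
      mul_one] at h2
    rw [map_intCast]
    push_cast
    linear_combination h2
  rw [Ideal.Quotient.eq_zero_iff_mem] at hz
  have hc := Ideal.span_singleton_absNorm (nP ▸ hp : (Ideal.absNorm P).Prime)
  have : (x ^ 2 - D * x + m : ℤ) ∈ Ideal.comap (algebraMap ℤ (𝓞 K)) P := by simpa using hz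
  rw [← hc, Ideal.mem_span_singleton, nP] at this
  exact hx x this
end

/-! ### The Kronecker symbol -/


theorem kronecker_mul {a : ℤ} {m n : ℕ} (h : Nat.Coprime m n) :
    kronecker a (m * n) = kronecker a m * kronecker a n := by
  unfold kronecker
  rw [Nat.factorization_mul_of_coprime h, Finsupp.prod_add_index_of_disjoint]
  simpa using h.disjoint_primeFactors

theorem kronecker_prime_pow {a : ℤ} {p : ℕ} (hp : p.Prime) (k : ℕ) :
    kronecker a (p ^ k) = kroneckerPrime a p ^ k := by
  unfold kronecker
  rw [hp.factorization_pow]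
  exact Finsupp.prod_single_index (pow_zero _)

theorem sum_kronecker_mul {a : ℤ} {m n : ℕ} (h : Nat.Coprime m n) :
    ∑ d ∈ (m * n).divisors, kronecker a d =
      (∑ d ∈ m.divisors, kronecker a d) * ∑ d ∈ n.divisors, kronecker a d := by
  rw [Nat.divisors_mul, Finset.mul_def, Finset.sum_image h.mul_injOn_divisors, Finset.sum_product,
    Finset.sum_mul_sum]
  refine Finset.sum_congr rfl fun d hd => Finset.sum_congr rfl fun e he => kronecker_mul ?_
  exact (h.coprime_dvd_left (Nat.dvd_of_mem_divisors hd)).coprime_dvd_right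
    (Nat.dvd_of_mem_divisors he)

/-- For a prime `p ∤ D`, the value `χ_{-D}(p) = ±1` records whether `X ^ 2 - D * X + m`, of
discriminant `-D`, has a root modulo `p`. -/
theorem kroneckerPrime_eq_one_or {D : ℕ} {m : ℤ} (hm : (D : ℤ) * (D + 1) = 4 * m) {p : ℕ}
    (hp : p.Prime) (hpD : ¬ p ∣ D) :
    (kroneckerPrime (-(D : ℤ)) p = 1 ∧ ∃ x : ℤ, (p : ℤ) ∣ x ^ 2 - D * x + m) ∨
    (kroneckerPrime (-(D : ℤ)) p = -1 ∧ ∀ x : ℤ, ¬ (p : ℤ) ∣ x ^ 2 - D * x + m) := by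
  unfold kroneckerPrime
  split_ifs with h2 h3 h4
  · subst h2; exfalso; omega
  · subst h2
    left
    refine ⟨rfl, 0, ?_⟩
    -- if `D = 8e + 7` then `m` is even and `0` is a root; `D = 8e + 1` contradicts `hm`
    obtain ⟨e, he⟩ : ∃ e : ℤ, (D : ℤ) = 8 * e + 7 ∨ (D : ℤ) = 8 * e + 1 := ⟨D / 8, by omega⟩
    rcases he with he | he
    · refine ⟨(8 * e + 7) * (e + 1), ?_⟩
      rw [he] at hm
      push_cast
      linarith
    · rw [he] at hm
      have : (8 * e + 1) * (8 * e + 1 + 1) = 4 * (16 * e ^ 2 + 6 * e) + 2 := by ring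
      omega
  · subst h2
    right
    refine ⟨rfl, fun x hx => ?_⟩
    -- if `D = 8e + 3` then `x ^ 2 - D * x` is even and `m` odd; `D = 8e + 5` contradicts `hm`
    obtain ⟨e, he⟩ : ∃ e : ℤ, (D : ℤ) = 8 * e + 3 ∨ (D : ℤ) = 8 * e + 5 := ⟨D / 8, by omega⟩
    have hpar : Even (x * (x - 1)) := Int.even_mul_pred_self x
    obtain ⟨c, hc⟩ := hx
    obtain ⟨b, hb⟩ := hpar
    rcases he with he | he
    · rw [he] at hm hc
      have h5 : m = (8 * e + 3) * (2 * e + 1) := by linarith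
      have h6 : x ^ 2 - (8 * e + 3) * x + m =
        2 * (b - (4 * e + 1) * x + (8 * e ^ 2 + 7 * e + 1)) + 1 := by
        rw [h5]; linear_combination hb
      rw [h6] at hc
      push_cast at hc
      omega
    · rw [he] at hm
      have : (8 * e + 5) * (8 * e + 5 + 1) = 4 * (16 * e ^ 2 + 22 * e + 7) + 2 := by ring
      omega
  · have : Fact p.Prime := ⟨hp⟩
    have hpZ : Prime (p : ℤ) := Nat.prime_iff_prime_int.1 hp
    have h20 : ¬ (p : ℤ) ∣ 4 := by
      intro h
      have h' : p ∣ 2 ^ 2 := by exact_mod_cast h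
      exact h2 ((Nat.prime_dvd_prime_iff_eq hp Nat.prime_two).1 (hp.dvd_of_dvd_pow h'))
    rw [← jacobiSym.legendreSym.to_jacobiSym]
    have hD0 : ((-(D : ℤ) : ℤ) : ZMod p) ≠ 0 := by
      rw [Ne, ZMod.intCast_zmod_eq_zero_iff_dvd, dvd_neg]
      exact_mod_cast hpD
    have hiff : IsSquare ((-(D : ℤ) : ℤ) : ZMod p) ↔ ∃ x : ℤ, (p : ℤ) ∣ x ^ 2 - D * x + m := by
      -- completing the square: `4(x² - Dx + m) = (2x - D)² + D`
      constructor
      · rintro ⟨r, hr⟩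
        have h2F : (2 : ZMod p) ≠ 0 := by
          intro h
          apply h20
          rw [← ZMod.intCast_zmod_eq_zero_iff_dvd]
          push_cast
          linear_combination 2 * h
        obtain ⟨x, hx⟩ := ZMod.intCast_surjective ((r + (D : ZMod p)) / 2)
        refine ⟨x, ?_⟩
        rw [eq_div_iff h2F] at hx
        refine (hpZ.dvd_or_dvd (a := 4) ?_).resolve_left h20
        rw [← ZMod.intCast_zmod_eq_zero_iff_dvd]
        have hmF : (D : ZMod p) * (D + 1) = 4 * m := by
          exact_mod_cast congrArg (Int.cast : ℤ → ZMod p) hm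
        push_cast at hr ⊢
        linear_combination (2 * x - D + r) * hx - hmF - hr
      · rintro ⟨x, hx⟩
        refine ⟨2 * x - D, ?_⟩
        have hx' := (ZMod.intCast_zmod_eq_zero_iff_dvd _ p).2 hx
        have hmF : (D : ZMod p) * (D + 1) = 4 * m := by
          exact_mod_cast congrArg (Int.cast : ℤ → ZMod p) hm
        push_cast at hx' ⊢
        linear_combination -4 * hx' - hmF
    by_cases hsq : IsSquare ((-(D : ℤ) : ℤ) : ZMod p)
    · exact Or.inl ⟨(legendreSym.eq_one_iff p hD0).2 hsq, hiff.1 hsq⟩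
    · refine Or.inr ⟨(legendreSym.eq_neg_one_iff p).2 hsq, fun x hx => hsq (hiff.2 ⟨x, hx⟩)⟩

/-- For `n ≥ 1` coprime to `D`, the number of nonzero ideals of norm `n` in the ring of
integers of the imaginary quadratic field `K = ℚ(√-D)` equals `Σ_{d ∣ n} χ_{-D}(d)`,
where `χ_{-D}` is the Kronecker symbol of the fundamental discriminant `-D < 0`. -/
theorem card_ideals_of_norm (D : ℕ) (hD : 0 < D)
    (hfund : IsFundamentalDiscriminant (-(D : ℤ)))
    (K : Type) [Field K] [NumberField K]
    (hdeg : Module.finrank ℚ K = 2) (hα : ∃ α : K, α ^ 2 = ((-(D : ℤ) : ℤ) : K))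
    (n : ℕ) (hn : 1 ≤ n) (hcop : Nat.Coprime n D) :
    (Nat.card {I : Ideal (𝓞 K) // I ≠ ⊥ ∧ Ideal.absNorm I = n} : ℤ) =
      ∑ d ∈ n.divisors, kronecker (-(D : ℤ)) d := by
  have hm' : ∃ m : ℤ, (D : ℤ) * (D + 1) = 4 * m := by
    have hmod : (D : ℤ) % 4 = 3 ∨ (D : ℤ) % 4 = 0 := by
      rcases hfund with ⟨h, -⟩ | ⟨h, -⟩ <;> omega
    rcases hmod with h | h
    · exact ⟨D * ((D + 1) / 4), by
        rw [mul_left_comm]; congr 1; omega⟩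
    · exact ⟨D / 4 * (D + 1), by
        rw [← mul_assoc]; congr 1; omega⟩
  obtain ⟨m, hm⟩ := hm'
  obtain ⟨α, hα⟩ := hα
  obtain ⟨ω, hω, hω2⟩ := exists_omega hα hm
  have hset : Nat.card {I : Ideal (𝓞 K) // I ≠ ⊥ ∧ Ideal.absNorm I = n} =
      (idealsOfNorm K n).ncard := by
    rw [← Nat.card_coe_set_eq]
    refine Nat.card_congr (Equiv.subtypeEquivRight fun I => ⟨fun h => h.2, fun h => ⟨?_, h⟩⟩)
    rintro rfl
    simp only [idealsOfNorm, Set.mem_ofPred_eq, Ideal.absNorm_bot] at h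
    omega
  rw [hset]
  clear hset
  induction n using Nat.recOnPosPrimePosCoprime with
  | zero => omega
  | one => simp [ncard_idealsOfNorm_one, kronecker]
  | coprime a b ha hb hab iha ihb =>
    rw [ncard_idealsOfNorm_mul hab, sum_kronecker_mul hab, Nat.cast_mul,
      iha (by omega) hcop.coprime_mul_right, ihb (by omega) hcop.coprime_mul_left]
  | prime_pow p k hp hk =>
    have hpD : ¬ p ∣ D :=
      hp.coprime_iff_not_dvd.1 (Nat.Coprime.coprime_dvd_left (dvd_pow_self p hk.ne') hcop)
    rw [Nat.sum_divisors_prime_pow hp]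
    simp only [kronecker_prime_pow hp]
    rcases kroneckerPrime_eq_one_or hm hp hpD with ⟨h1, x, hx⟩ | ⟨h1, hx⟩
    · obtain ⟨P, Q, hP, hQ, hne, hmul, nP, nQ⟩ :=
        exists_split hdeg hD hα hω hm hω2 hp hpD hx
      rw [ncard_idealsOfNorm_pow_split hp hP hQ hne hmul nP nQ, h1]
      simp
    · rw [ncard_idealsOfNorm_pow_inert hp hdeg (prime_span_of_no_root hdeg hω2 hp hx), h1,
        neg_one_geom_sum]
      by_cases hk2 : Even k <;> simp [hk2, Nat.even_add_one]
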